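/- Let Q ∈ {1,−1,0}^m with counts N^+, N^-, N^0, let ε > 0, δ ∈ (0,1), s̃ ≥ 1, p ≥ 2, γ > 0, and set ε′ = ε/(4√(2 s̃ log(2/δ))). Let Q̂ ∈ {1, 0, −1} be a random sign sampled with P(Q̂ = θ) proportional to exp(ε′ f(Q, θ)/4) for θ ∈ {1, 0, −1}. If f(Q, 0) = min{N^+ + N^0 − N^-, N^- + N^0 − N^+} ≥ 8(γ+1)√(2 s̃ log(2/δ)) log p / ε, then P(Q̂ = 0) ≥ 1 − 2 p^{−γ−1}. -/

import Mathlib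

open MeasureTheory ProbabilityTheory Real

instance : MeasurableSpace SignType := ⊤

/-- Number of coordinates reporting `+1`. -/
def Nplus {m : ℕ} (Q : Fin m → SignType) : ℕ := (Finset.univ.filter fun j => Q j = 1).card

/-- Number of coordinates reporting `-1`. -/
def Nminus {m : ℕ} (Q : Fin m → SignType) : ℕ := (Finset.univ.filter fun j => Q j = -1).card

/-- Number of coordinates reporting `0`. -/
def Nzero {m : ℕ} (Q : Fin m → SignType) : ℕ := (Finset.univ.filter fun j => Q j = 0).card

/-- Utility functions `f(Q, θ)` for `θ ∈ {1, -1, 0}`. -/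
def utilFn {m : ℕ} (Q : Fin m → SignType) : SignType → ℤ
  | SignType.pos => (Nplus Q : ℤ) - Nzero Q - Nminus Q
  | SignType.neg => (Nminus Q : ℤ) - Nzero Q - Nplus Q
  | SignType.zero => min ((Nplus Q : ℤ) + Nzero Q - Nminus Q) ((Nminus Q : ℤ) + Nzero Q - Nplus Q)

/-!
Since `f(Q, 0)` is the smaller of `-f(Q, 1)` and `-f(Q, -1)`, it exceeds both competing utilities
by at least `2 f(Q, 0)`. The mechanism weighs `θ` by `exp (ε' f(Q, θ) / 4)`, so each of the two
nonzero signs is at most `exp (-ε' f(Q, 0) / 2)` times as likely as `0`; the threshold on `f(Q, 0)`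
is exactly what brings this ratio down to `p ^ (-γ - 1)`.
-/

/-- The Gibbs distribution `θ ↦ exp (u θ) / ∑ θ', exp (u θ')` on a finite type. The exponential
mechanism samples from it, with the privacy level and its constant factor absorbed into `u`. -/
noncomputable def softmax {α : Type*} [Fintype α] (u : α → ℝ) (a : α) : ℝ :=
  exp (u a) / ∑ b, exp (u b)

theorem one_sub_card_sub_one_mul_exp_neg_le_softmax {α : Type*} [Fintype α] {u : α → ℝ} {a : α}
    {g : ℝ} (hgap : ∀ b ≠ a, u b + g ≤ u a) :
    1 - (Fintype.card α - 1) * exp (-g) ≤ softmax u a := by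
  classical
  set k : ℝ := Fintype.card α - 1
  set rest := ∑ b ∈ Finset.univ.erase a, exp (u b)
  have hsum : ∑ b, exp (u b) = exp (u a) + rest :=
    (Finset.add_sum_erase _ _ (Finset.mem_univ a)).symm
  have hcard : ((Finset.univ.erase a).card : ℝ) = k := by
    rw [Finset.cast_card_erase_of_mem (Finset.mem_univ a), Finset.card_univ]
  have hk : 0 ≤ k := hcard ▸ Nat.cast_nonneg _
  have hrest_nonneg : 0 ≤ rest := Finset.sum_nonneg fun b _ => (exp_pos _).le
  have hrest : rest ≤ k * exp (-g) * exp (u a) := by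
    calc rest ≤ (Finset.univ.erase a).card • exp (-g + u a) :=
          Finset.sum_le_card_nsmul _ _ _ fun b hb =>
            exp_le_exp.2 (by linarith [hgap b (Finset.ne_of_mem_erase hb)])
      _ = k * exp (-g) * exp (u a) := by rw [nsmul_eq_mul, hcard, exp_add, mul_assoc]
  have hcross : 0 ≤ k * exp (-g) * rest := by positivity
  rw [softmax, hsum, le_div_iff₀ (by positivity)]
  linarith

theorem utilFn_zero {m : ℕ} (Q : Fin m → SignType) :
    utilFn Q 0 = min (-utilFn Q 1) (-utilFn Q (-1)) := by
  change min ((Nplus Q : ℤ) + Nzero Q - Nminus Q) ((Nminus Q : ℤ) + Nzero Q - Nplus Q) =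
    min (-((Nplus Q : ℤ) - Nzero Q - Nminus Q)) (-((Nminus Q : ℤ) - Nzero Q - Nplus Q))
  omega

theorem utilFn_le_neg_utilFn_zero {m : ℕ} (Q : Fin m → SignType) {θ : SignType} (hθ : θ ≠ 0) :
    utilFn Q θ ≤ -utilFn Q 0 := by
  rw [utilFn_zero, le_neg]
  cases θ with
  | zero => exact absurd rfl hθ
  | neg => exact min_le_right _ _
  | pos => exact min_le_left _ _

theorem expMech_selects_zero_general {Ω : Type*} [MeasurableSpace Ω] (P : Measure Ω) {m : ℕ}
    (Q : Fin m → SignType) (Qhat : Ω → SignType) {η : ℝ} (hη : 0 ≤ η)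
    (hlaw : ∀ θ : SignType, P {ω | Qhat ω = θ} =
      ENNReal.ofReal (softmax (fun θ' => η * (utilFn Q θ' : ℝ) / 4) θ)) :
    ENNReal.ofReal (1 - 2 * exp (-(η * (utilFn Q 0 : ℝ) / 2))) ≤ P {ω | Qhat ω = 0} := by
  have hgap : ∀ θ ≠ 0,
      η * (utilFn Q θ : ℝ) / 4 + η * (utilFn Q 0 : ℝ) / 2 ≤ η * (utilFn Q 0 : ℝ) / 4 := by
    intro θ hθ
    have hutil : (utilFn Q θ : ℝ) ≤ -(utilFn Q 0 : ℝ) := by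
      exact_mod_cast utilFn_le_neg_utilFn_zero Q hθ
    linarith [mul_le_mul_of_nonneg_left hutil hη]
  have hcard : (Fintype.card SignType : ℝ) - 1 = 2 := by
    rw [show Fintype.card SignType = 3 from rfl]
    norm_num
  have hsoftmax := one_sub_card_sub_one_mul_exp_neg_le_softmax hgap
  rw [hcard] at hsoftmax
  rw [hlaw 0]
  exact ENNReal.ofReal_le_ofReal hsoftmax

theorem sqrt_two_mul_mul_log_two_div_pos {s δ : ℝ} (hs : 0 < s) (hδ0 : 0 < δ) (hδ2 : δ < 2) :
    0 < √(2 * s * log (2 / δ)) := by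
  have hlog : 0 < log (2 / δ) := log_pos ((one_lt_div hδ0).2 hδ2)
  positivity

theorem exp_neg_div_mul_le_rpow_of_le {ε S p γ x : ℝ} (hε : 0 < ε) (hS : 0 < S) (hp : 0 < p)
    (hx : 8 * (γ + 1) * S * log p / ε ≤ x) :
    exp (-(ε / (4 * S) * x / 2)) ≤ p ^ (-γ - 1) := by
  rw [rpow_def_of_pos hp, exp_le_exp]
  calc -(ε / (4 * S) * x / 2)
      ≤ -(ε / (4 * S) * (8 * (γ + 1) * S * log p / ε) / 2) := by gcongr
    _ = log p * (-γ - 1) := by field_simp; ring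

/-- if `Q̂` is sampled from the exponential mechanism with utilities
`f(Q, θ)` at privacy level `ε′ = ε/(4√(2 s̃ log(2/δ)))`, and
`f(Q,0) ≥ 8(γ+1)√(2 s̃ log(2/δ)) log p / ε`, then `P(Q̂ = 0) ≥ 1 − 2 p^{−γ−1}`. -/
theorem expMech_selects_zero {Ω : Type*} [MeasurableSpace Ω]
    (P : Measure Ω) [IsProbabilityMeasure P]
    (m st p : ℕ) (hst : 1 ≤ st) (hp : 2 ≤ p)
    (ε δ γ : ℝ) (hε : 0 < ε) (hδ0 : 0 < δ) (hδ1 : δ < 1) (hγ : 0 < γ)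
    (Q : Fin m → SignType) (Qhat : Ω → SignType)
    (hlaw : ∀ θ : SignType, P {ω | Qhat ω = θ} =
      ENNReal.ofReal
        (Real.exp (ε / (4 * Real.sqrt (2 * st * Real.log (2 / δ))) * (utilFn Q θ : ℝ) / 4) /
          ∑ θ' : SignType,
            Real.exp (ε / (4 * Real.sqrt (2 * st * Real.log (2 / δ))) * (utilFn Q θ' : ℝ) / 4)))
    (hf : 8 * (γ + 1) * Real.sqrt (2 * st * Real.log (2 / δ)) * Real.log p / ε ≤
      (utilFn Q 0 : ℝ)) :
    ENNReal.ofReal (1 - 2 * (p : ℝ) ^ (-γ - 1)) ≤ P {ω | Qhat ω = 0} := by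
  have htail := exp_neg_div_mul_le_rpow_of_le hε
    (sqrt_two_mul_mul_log_two_div_pos (by positivity) hδ0 (by linarith)) (by positivity) hf
  exact (ENNReal.ofReal_le_ofReal (by linarith)).trans
    (expMech_selects_zero_general P Q Qhat (by positivity) hlaw)
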